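/- Let m ≥ 1, let s = [[a,b],[c,d]] ∈ Sp_{2m} (with m×m real blocks a, b, c, d regarded as complex matrices), and let x ∈ SH_m. Then the matrix c x + d is invertible, and s[x] := (a x + b)(c x + d)^{-1} again belongs to SH_m, i.e., it is complex symmetric with real symmetric real part and real symmetric positive definite imaginary part. -/

import Mathlib

open Matrix

/-! Write `P = a x + b` and `Q = c x + d`. A matrix `S` with `Sᴴ J S = J` preserves the form
`(P, Q) ↦ Qᴴ P - Pᴴ Q`, so `Qᴴ P - Pᴴ Q = x - xᴴ`, i.e. `ℑ (Qᴴ P) = ℑ x`. If this is positive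
definite then `Q` has trivial kernel, and `ℑ (Qᴴ P) = Qᴴ ℑ (P Q⁻¹) Q` makes `ℑ (P Q⁻¹)` congruent
to `ℑ x`. In the same way `Sᵀ J S = J` gives `Qᵀ P - Pᵀ Q = x - xᵀ`, which carries the symmetry of
`x` over to `P Q⁻¹`. A real symplectic `S` satisfies both relations. -/

section RealMatrix

open scoped ComplexOrder MatrixOrder

variable {m n 𝕜 : Type*} [RCLike 𝕜]

theorem conjTranspose_map_ofReal (M : Matrix m n ℝ) :
    (M.map ((↑) : ℝ → 𝕜))ᴴ = Mᵀ.map ((↑) : ℝ → 𝕜) := by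
  rw [← conjTranspose_map _ fun r => by simp, conjTranspose_eq_transpose_of_trivial]

theorem posDef_map_ofReal_iff [Finite n] {M : Matrix n n ℝ} :
    (M.map ((↑) : ℝ → 𝕜)).PosDef ↔ M.PosDef := by
  classical
  have := Fintype.ofFinite n
  constructor
  · intro hM
    have hHerm : M.IsHermitian :=
      (isHermitian_map_iff (fun r => by simp) RCLike.ofReal_injective).mp hM.isHermitian
    refine .of_dotProduct_mulVec_pos hHerm fun p hp => ?_
    have hp' : (fun i => (p i : 𝕜)) ≠ 0 := fun h =>
      hp (funext fun i => RCLike.ofReal_eq_zero.mp (congrFun h i))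
    have hform : (star fun i => (p i : 𝕜)) ⬝ᵥ (M.map ((↑) : ℝ → 𝕜) *ᵥ fun i => (p i : 𝕜)) =
        ((star p ⬝ᵥ (M *ᵥ p) : ℝ) : 𝕜) := by
      simp [dotProduct, mulVec]
    simpa only [hform, RCLike.ofReal_pos] using hM.dotProduct_mulVec_pos hp'
  · intro hM
    obtain ⟨B, hB, rfl⟩ :=
      CStarAlgebra.isStrictlyPositive_iff_eq_star_mul_self.mp hM.isStrictlyPositive
    have hB' : IsUnit (B.map ((↑) : ℝ → 𝕜)) := hB.map (algebraMap ℝ 𝕜).mapMatrix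
    have hmap : (star B * B).map ((↑) : ℝ → 𝕜) =
        (B.map ((↑) : ℝ → 𝕜))ᴴ * B.map ((↑) : ℝ → 𝕜) := by
      rw [conjTranspose_map_ofReal, star_eq_conjTranspose, conjTranspose_eq_transpose_of_trivial]
      exact Matrix.map_mul (f := algebraMap ℝ 𝕜)
    rw [hmap]
    exact .conjTranspose_mul_self _ (mulVec_injective_of_isUnit hB')

end RealMatrix

section ImaginaryPart

open scoped ComplexOrder ComplexStarModule

theorem imaginaryPart_star_mul_mul {A : Type*} [Ring A] [StarRing A] [Algebra ℂ A] [StarModule ℂ A]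
    (q y : A) : (ℑ (star q * y * q) : A) = star q * ℑ y * q := by
  simp only [imaginaryPart_apply_coe, star_mul, star_star, mul_smul_comm, smul_mul_assoc, mul_sub,
    sub_mul, mul_assoc]

variable {n : Type*}

theorem imaginaryPart_eq_map_im {x : Matrix n n ℂ} (hx : x.IsSymm) :
    (ℑ x : Matrix n n ℂ) = (x.map Complex.im).map ((↑) : ℝ → ℂ) := by
  ext i j
  rw [imaginaryPart_apply_coe]
  apply Complex.ext <;> simp [hx.apply i j]
  ring

theorem posDef_imaginaryPart_iff [Finite n] {x : Matrix n n ℂ} (hx : x.IsSymm) :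
    (ℑ x : Matrix n n ℂ).PosDef ↔ (x.map Complex.im).PosDef := by
  rw [imaginaryPart_eq_map_im hx]
  exact posDef_map_ofReal_iff

theorem isUnit_of_posDef_imaginaryPart_conjTranspose_mul [Fintype n] [DecidableEq n]
    {P Q : Matrix n n ℂ} (h : (ℑ (Qᴴ * P) : Matrix n n ℂ).PosDef) : IsUnit Q := by
  rw [← mulVec_injective_iff_isUnit, ← coe_mulVecLin, injective_iff_map_eq_zero]
  intro w hw
  rw [mulVecLin_apply] at hw
  by_contra hne
  have hPQ : star w ⬝ᵥ ((Qᴴ * P) *ᵥ w) = 0 := by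
    rw [← mulVec_mulVec, dotProduct_mulVec, ← star_mulVec, hw, star_zero, zero_dotProduct]
  have hQP : star w ⬝ᵥ ((Pᴴ * Q) *ᵥ w) = 0 := by
    rw [← mulVec_mulVec, hw, mulVec_zero, dotProduct_zero]
  have hzero : star w ⬝ᵥ ((ℑ (Qᴴ * P) : Matrix n n ℂ) *ᵥ w) = 0 := by
    rw [imaginaryPart_apply_coe, star_eq_conjTranspose, conjTranspose_mul,
      conjTranspose_conjTranspose, smul_mulVec, smul_mulVec, sub_mulVec, dotProduct_smul,
      dotProduct_smul, dotProduct_sub, hPQ, hQP, sub_zero, smul_zero, smul_zero]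
  exact (h.dotProduct_mulVec_pos hne).ne' hzero

end ImaginaryPart

section Mobius

variable {n R : Type*} [Fintype n] [CommRing R]

/-- The numerator `a x + b` of the Möbius action of the block matrix `S = [[a, b], [c, d]]`. -/
def mobiusNum (S : Matrix (n ⊕ n) (n ⊕ n) R) (x : Matrix n n R) : Matrix n n R :=
  S.toBlocks₁₁ * x + S.toBlocks₁₂

/-- The denominator `c x + d` of the Möbius action of the block matrix `S = [[a, b], [c, d]]`. -/
def mobiusDenom (S : Matrix (n ⊕ n) (n ⊕ n) R) (x : Matrix n n R) : Matrix n n R :=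
  S.toBlocks₂₁ * x + S.toBlocks₂₂

variable [DecidableEq n]

theorem fromBlocks_mem_symplecticGroup_iff {a b c d : Matrix n n R} :
    fromBlocks a b c d ∈ symplecticGroup n R ↔
      a * bᵀ = b * aᵀ ∧ c * dᵀ = d * cᵀ ∧ a * dᵀ - b * cᵀ = 1 := by
  have htranspose : d * aᵀ - c * bᵀ = (a * dᵀ - b * cᵀ)ᵀ := by
    simp only [transpose_sub, transpose_mul, transpose_transpose]
  rw [SymplecticGroup.mem_iff, J, fromBlocks_transpose, fromBlocks_multiply, fromBlocks_multiply,
    fromBlocks_inj]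
  simp only [Matrix.mul_zero, Matrix.mul_one, Matrix.mul_neg, zero_add, add_zero, Matrix.neg_mul,
    ← sub_eq_add_neg, htranspose, transpose_eq_one, sub_eq_zero]
  rw [← neg_sub, neg_inj]
  tauto

/-- The matrix Möbius action `S[x] = (a x + b) (c x + d)⁻¹`. The inverse is the junk value `0`
unless `mobiusDenom S x` is a unit. -/
noncomputable def mobius (S : Matrix (n ⊕ n) (n ⊕ n) R) (x : Matrix n n R) : Matrix n n R :=
  mobiusNum S x * (mobiusDenom S x)⁻¹

theorem fromRows_mobiusNum_mobiusDenom (S : Matrix (n ⊕ n) (n ⊕ n) R) (x : Matrix n n R) :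
    fromRows (mobiusNum S x) (mobiusDenom S x) = S * fromRows x (1 : Matrix n n R) := by
  conv_rhs => rw [← S.fromBlocks_toBlocks]
  rw [fromBlocks_mul_fromRows, mul_one, mul_one, mobiusNum, mobiusDenom]

theorem fromCols_mul_J_mul_fromRows {l m : Type*} (P' Q' : Matrix l n R) (P Q : Matrix n m R) :
    fromCols P' Q' * J n R * fromRows P Q = Q' * P - P' * Q := by
  simp only [J, fromCols_mul_fromBlocks, fromCols_mul_fromRows, Matrix.mul_zero, Matrix.mul_one,
    Matrix.mul_neg, Matrix.neg_mul, zero_add, add_zero, sub_eq_add_neg]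

theorem transpose_mobiusDenom_mul_mobiusNum_sub {S : Matrix (n ⊕ n) (n ⊕ n) R}
    (hS : S ∈ symplecticGroup n R) (x : Matrix n n R) :
    (mobiusDenom S x)ᵀ * mobiusNum S x - (mobiusNum S x)ᵀ * mobiusDenom S x = x - xᵀ := by
  calc (mobiusDenom S x)ᵀ * mobiusNum S x - (mobiusNum S x)ᵀ * mobiusDenom S x
    _ = (fromRows x (1 : Matrix n n R))ᵀ * (Sᵀ * J n R * S) * fromRows x (1 : Matrix n n R) := by
      rw [← fromCols_mul_J_mul_fromRows, ← transpose_fromRows, fromRows_mobiusNum_mobiusDenom,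
        transpose_mul]
      simp only [Matrix.mul_assoc]
    _ = x - xᵀ := by
      rw [SymplecticGroup.mem_iff'.mp hS, transpose_fromRows, fromCols_mul_J_mul_fromRows,
        transpose_one, one_mul, mul_one]

theorem conjTranspose_mobiusDenom_mul_mobiusNum_sub [StarRing R] {S : Matrix (n ⊕ n) (n ⊕ n) R}
    (hS : Sᴴ * J n R * S = J n R) (x : Matrix n n R) :
    (mobiusDenom S x)ᴴ * mobiusNum S x - (mobiusNum S x)ᴴ * mobiusDenom S x = x - xᴴ := by
  calc (mobiusDenom S x)ᴴ * mobiusNum S x - (mobiusNum S x)ᴴ * mobiusDenom S x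
    _ = (fromRows x (1 : Matrix n n R))ᴴ * (Sᴴ * J n R * S) * fromRows x (1 : Matrix n n R) := by
      rw [← fromCols_mul_J_mul_fromRows, ← conjTranspose_fromRows_eq_fromCols_conjTranspose,
        fromRows_mobiusNum_mobiusDenom, conjTranspose_mul]
      simp only [Matrix.mul_assoc]
    _ = x - xᴴ := by
      rw [hS, conjTranspose_fromRows_eq_fromCols_conjTranspose, fromCols_mul_J_mul_fromRows,
        conjTranspose_one, one_mul, mul_one]

theorem mobius_mul_mobiusDenom {S : Matrix (n ⊕ n) (n ⊕ n) R} {x : Matrix n n R}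
    (hQ : IsUnit (mobiusDenom S x)) : mobius S x * mobiusDenom S x = mobiusNum S x :=
  nonsing_inv_mul_cancel_right _ _ ((isUnit_iff_isUnit_det _).mp hQ)

theorem isSymm_mobius {S : Matrix (n ⊕ n) (n ⊕ n) R} (hS : S ∈ symplecticGroup n R)
    {x : Matrix n n R} (hx : x.IsSymm) (hQ : IsUnit (mobiusDenom S x)) : (mobius S x).IsSymm := by
  have h := transpose_mobiusDenom_mul_mobiusNum_sub hS x
  rw [hx.eq, sub_self, sub_eq_zero, ← mobius_mul_mobiusDenom hQ, transpose_mul, ← mul_assoc] at h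
  exact ((isUnit_transpose _).mpr hQ).mul_left_cancel (hQ.mul_right_cancel h).symm

end Mobius

section PseudoUnitary

open scoped ComplexOrder ComplexStarModule

variable {n : Type*} [Fintype n] [DecidableEq n] {S : Matrix (n ⊕ n) (n ⊕ n) ℂ}
  {x : Matrix n n ℂ}

theorem imaginaryPart_conjTranspose_mobiusDenom_mul_mobiusNum (hS : Sᴴ * J n ℂ * S = J n ℂ)
    (x : Matrix n n ℂ) :
    (ℑ ((mobiusDenom S x)ᴴ * mobiusNum S x) : Matrix n n ℂ) = ℑ x := by
  rw [imaginaryPart_apply_coe, imaginaryPart_apply_coe, star_eq_conjTranspose, conjTranspose_mul,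
    conjTranspose_conjTranspose, conjTranspose_mobiusDenom_mul_mobiusNum_sub hS,
    star_eq_conjTranspose]

theorem isUnit_mobiusDenom (hS : Sᴴ * J n ℂ * S = J n ℂ) (hx : (ℑ x : Matrix n n ℂ).PosDef) :
    IsUnit (mobiusDenom S x) := by
  rw [← imaginaryPart_conjTranspose_mobiusDenom_mul_mobiusNum hS] at hx
  exact isUnit_of_posDef_imaginaryPart_conjTranspose_mul hx

theorem posDef_imaginaryPart_mobius (hS : Sᴴ * J n ℂ * S = J n ℂ)
    (hx : (ℑ x : Matrix n n ℂ).PosDef) : (ℑ (mobius S x) : Matrix n n ℂ).PosDef := by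
  have hQ := isUnit_mobiusDenom hS hx
  rw [← imaginaryPart_conjTranspose_mobiusDenom_mul_mobiusNum hS, ← mobius_mul_mobiusDenom hQ,
    ← mul_assoc, ← star_eq_conjTranspose, imaginaryPart_star_mul_mul] at hx
  exact hQ.posDef_star_left_conjugate_iff.mp hx

end PseudoUnitary

section SiegelUpperHalfSpace

open scoped ComplexOrder

/-- The Siegel upper half space: the symmetric complex matrices with positive definite imaginary
part, the latter being taken entrywise so that it is a real matrix. -/
def siegelUpperHalfSpace (n : Type*) : Set (Matrix n n ℂ) :=
  {x | x.IsSymm ∧ (x.map Complex.im).PosDef}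

variable {n : Type*}

theorem mem_siegelUpperHalfSpace_iff_exists {x : Matrix n n ℂ} :
    x ∈ siegelUpperHalfSpace n ↔ ∃ u v : Matrix n n ℝ, uᵀ = u ∧ v.PosDef ∧
      x = u.map ((↑) : ℝ → ℂ) + Complex.I • v.map ((↑) : ℝ → ℂ) := by
  constructor
  · rintro ⟨hsymm, him⟩
    refine ⟨x.map Complex.re, x.map Complex.im, by rw [← transpose_map, hsymm.eq], him, ?_⟩
    ext i j
    apply Complex.ext <;> simp
  · rintro ⟨u, v, hu, hv, rfl⟩
    have hvt : vᵀ = v := isHermitian_iff_isSymm.mp hv.isHermitian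
    constructor
    · rw [IsSymm, transpose_add, transpose_smul, ← transpose_map, ← transpose_map, hu, hvt]
    · convert hv
      ext i j
      simp

variable [Fintype n] [DecidableEq n] {S : Matrix (n ⊕ n) (n ⊕ n) ℝ}

theorem conjTranspose_mul_J_mul_map_ofReal (hS : S ∈ symplecticGroup n ℝ) :
    (S.map ((↑) : ℝ → ℂ))ᴴ * J n ℂ * S.map ((↑) : ℝ → ℂ) = J n ℂ := by
  have hconj : (S.map ((↑) : ℝ → ℂ))ᴴ = (S.map ((↑) : ℝ → ℂ))ᵀ := conjTranspose_map_ofReal S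
  rw [hconj]
  exact SymplecticGroup.mem_iff'.mp (SymplecticGroup.map_mem hS Complex.ofRealHom)

theorem mobius_maps_SH_to_SH_general (hS : S ∈ symplecticGroup n ℝ) {x : Matrix n n ℂ}
    (hx : x ∈ siegelUpperHalfSpace n) :
    IsUnit (mobiusDenom (S.map ((↑) : ℝ → ℂ)) x) ∧
      mobius (S.map ((↑) : ℝ → ℂ)) x ∈ siegelUpperHalfSpace n := by
  obtain ⟨hsymm, him⟩ := hx
  have hpos := (posDef_imaginaryPart_iff hsymm).mpr him
  have hS' := conjTranspose_mul_J_mul_map_ofReal hS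
  have hQ := isUnit_mobiusDenom hS' hpos
  have hsymm' := isSymm_mobius (SymplecticGroup.map_mem hS Complex.ofRealHom) hsymm hQ
  exact ⟨hQ, hsymm',
    (posDef_imaginaryPart_iff hsymm').mp (posDef_imaginaryPart_mobius hS' hpos)⟩

end SiegelUpperHalfSpace

/-- the symplectic Möbius action maps the Siegel upper half
space into itself. -/
theorem mobius_maps_SH_to_SH (m : ℕ) (hm : 1 ≤ m)
    (a b c d : Matrix (Fin m) (Fin m) ℝ)
    (hs : a * bᵀ = b * aᵀ ∧ c * dᵀ = d * cᵀ ∧ a * dᵀ - b * cᵀ = 1)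
    (u v : Matrix (Fin m) (Fin m) ℝ) (hu : uᵀ = u) (hv : v.PosDef)
    (x : Matrix (Fin m) (Fin m) ℂ)
    (hx : x = u.map ((↑) : ℝ → ℂ) + Complex.I • v.map ((↑) : ℝ → ℂ)) :
    IsUnit (c.map ((↑) : ℝ → ℂ) * x + d.map ((↑) : ℝ → ℂ)) ∧
    ∃ u' v' : Matrix (Fin m) (Fin m) ℝ, u'ᵀ = u' ∧ v'.PosDef ∧
      (a.map ((↑) : ℝ → ℂ) * x + b.map ((↑) : ℝ → ℂ)) *
        (c.map ((↑) : ℝ → ℂ) * x + d.map ((↑) : ℝ → ℂ))⁻¹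
      = u'.map ((↑) : ℝ → ℂ) + Complex.I • v'.map ((↑) : ℝ → ℂ) := by
  have hS := fromBlocks_mem_symplecticGroup_iff.mpr hs
  have hx' := mem_siegelUpperHalfSpace_iff_exists.mpr ⟨u, v, hu, hv, hx⟩
  obtain ⟨hdenom, hmobius⟩ := mobius_maps_SH_to_SH_general hS hx'
  exact ⟨hdenom, mem_siegelUpperHalfSpace_iff_exists.mp hmobius⟩
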